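/- Let p and q be distinct primes, H a nontrivial finite abelian p-group with exp(H) = p^k, m a positive integer, and G = H ⊕ C_{q^m}. If U is a minimal zero-sum sequence over G with k(U) = K(G), then U = g · U_p · U_q where g is a single element of order p^k q^m = exp(G), U_p is a zero-sum free sequence over the p-primary component H ⊕ {0} of G, and U_q is a zero-sum free sequence over the q-primary component {0} ⊕ C_{q^m} of G. -/

import Mathlib

/-- The cross number `k(S)` of a sequence (finite multiset) `S` over an additive group:
the sum, with multiplicity, of the reciprocals of the orders of its elements. -/
noncomputable def crossNum {G : Type*} [AddCommGroup G] (S : Multiset G) : ℝ :=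
  (S.map fun g => ((addOrderOf g : ℝ))⁻¹).sum

/-- `S` is zero-sum free: no nonempty sub-multiset of `S` has sum `0`. -/
def IsZeroSumFree {G : Type*} [AddCommGroup G] (S : Multiset G) : Prop :=
  ∀ T : Multiset G, T ≤ S → T ≠ 0 → T.sum ≠ 0

/-- The little cross number `k(G)`: the maximal cross number of a zero-sum free
sequence over `G`. -/
noncomputable def littleK (G : Type*) [AddCommGroup G] : ℝ :=
  sSup {x : ℝ | ∃ S : Multiset G, IsZeroSumFree S ∧ crossNum S = x}

/-- `S` is a minimal zero-sum sequence: nonempty, sum zero, and no nonempty proper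
sub-multiset has sum `0`. -/
def IsMinZeroSum {G : Type*} [AddCommGroup G] (S : Multiset G) : Prop :=
  S ≠ 0 ∧ S.sum = 0 ∧ ∀ T : Multiset G, T ≤ S → T ≠ 0 → T ≠ S → T.sum ≠ 0

/-- The cross number `K(G)`: the maximal cross number of a minimal zero-sum
sequence over `G`. -/
noncomputable def bigK (G : Type*) [AddCommGroup G] : ℝ :=
  sSup {x : ℝ | ∃ S : Multiset G, IsMinZeroSum S ∧ crossNum S = x}

/-!
Let `C = C_{q^m}`, so `K(C) = 1` and `k(C) = 1 - 1/exp C`. Write `U = Uq + V`, where `Uq` consists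
of the elements of `U` with trivial `H`-component. Treat the elements of `V` in stages, by
increasing order of their `H`-components; at each stage, extract from the elements at hand as many
blocks as possible whose `C`-components form a minimal zero-sum sequence. The `C`-components of a
block have cross number at most `1`, and the sums of all the blocks form a minimal zero-sum
sequence over `H`, whose cross number is at most `K(H) = k(H) + 1/exp H`. Compared with the lower
bound `K(G) ≥ k(H) + k(C) + (1 - k(C))/exp H`, this forces `Uq` to have cross number `k(C)`.

A zero-sum free sequence of maximal cross number has every element of `C` as a subsequence sum, so
`V` projects to a minimal zero-sum sequence over `H`. This projection raises the cross number of
`V` by at most `k(C)/exp H`, which leaves room for exactly one element of `V` with nonzero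
`C`-component, and only if its `H`-component has order `exp H`. Its `C`-component cancels the sum
of `Uq`, which has order `exp C` by maximality.
-/

section Multiset
variable {α β : Type*}

theorem exists_le_map_eq_of_le_map {f : α → β} {S : Multiset α} {T : Multiset β}
    (h : T ≤ S.map f) : ∃ S' ≤ S, S'.map f = T := by
  induction S, T using Quotient.inductionOn₂ with | _ l t =>
  obtain ⟨u, hut, hul⟩ := h
  obtain ⟨l', hl', rfl⟩ := List.sublist_map_iff.1 hul
  exact ⟨l', hl'.subperm, Quotient.sound hut⟩

theorem exists_le_le_add_eq_of_le_add {A B T : Multiset α} (h : T ≤ A + B) :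
    ∃ A' ≤ A, ∃ B' ≤ B, A' + B' = T := by
  classical
  refine ⟨T ∩ A, Multiset.inter_le_right, T - A, tsub_le_iff_left.2 h, ?_⟩
  ext a
  simp only [Multiset.count_add, Multiset.count_inter, Multiset.count_sub]
  omega

theorem exists_eq_sum_add_of_greedy (P : Multiset α → Prop) (V : Multiset α) :
    ∃ (B : Multiset (Multiset α)) (R : Multiset α),
      V = B.sum + R ∧ (∀ T ∈ B, P T) ∧ ∀ T ≤ R, T ≠ 0 → ¬ P T := by
  induction V using Multiset.strongInductionOn with | _ V ih =>
  by_cases h : ∀ T ≤ V, T ≠ 0 → ¬ P T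
  · exact ⟨0, V, by simp, by simp, h⟩
  · push Not at h
    obtain ⟨T, hTV, hT0, hT⟩ := h
    obtain ⟨W, rfl⟩ := Multiset.le_iff_exists_add.1 hTV
    obtain ⟨B, R, rfl, hB, hR⟩ := ih W (lt_add_of_pos_left W (pos_iff_ne_zero.2 hT0))
    exact ⟨T ::ₘ B, R, by rw [Multiset.sum_cons, add_assoc],
      Multiset.forall_mem_cons.2 ⟨hT, hB⟩, hR⟩

theorem sum_ne_zero_of_forall_ne_zero {B : Multiset (Multiset α)} (hB0 : B ≠ 0)
    (hB : ∀ T ∈ B, T ≠ 0) : B.sum ≠ 0 := by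
  obtain ⟨T, hT⟩ := Multiset.exists_mem_of_ne_zero hB0
  exact fun h0 => hB T hT (Multiset.sum_eq_zero_iff.1 h0 T hT)

end Multiset

section CrossNum
variable {G G' : Type*} [AddCommGroup G] [AddCommGroup G']

@[simp]
theorem crossNum_zero : crossNum (0 : Multiset G) = 0 := by
  simp [crossNum]

@[simp]
theorem crossNum_cons (g : G) (S : Multiset G) :
    crossNum (g ::ₘ S) = (addOrderOf g : ℝ)⁻¹ + crossNum S := by
  simp [crossNum]

@[simp]
theorem crossNum_add (S T : Multiset G) : crossNum (S + T) = crossNum S + crossNum T := by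
  simp [crossNum]

theorem crossNum_replicate (n : ℕ) (g : G) :
    crossNum (Multiset.replicate n g) = n * (addOrderOf g : ℝ)⁻¹ := by
  simp [crossNum]

theorem crossNum_sum (B : Multiset (Multiset G)) : crossNum B.sum = (B.map crossNum).sum := by
  induction B using Multiset.induction_on with
  | empty => simp
  | cons T B ih => simp [ih]

theorem crossNum_map_of_injective (f : G →+ G') (hf : Function.Injective f) (S : Multiset G) :
    crossNum (S.map f) = crossNum S := by
  simp [crossNum, addOrderOf_injective f hf]

theorem crossNum_le_card (S : Multiset G) :
    crossNum S ≤ S.card := by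
  induction S using Multiset.induction_on with
  | empty => simp
  | cons g S ih =>
    rw [crossNum_cons, Multiset.card_cons, Nat.cast_succ, add_comm]
    exact add_le_add ih (Nat.cast_inv_le_one _)

theorem card_mul_inv_le_crossNum {n : ℕ} (hn : n ≠ 0) {S : Multiset G}
    (hS : ∀ g ∈ S, addOrderOf g ∣ n) : S.card * (n : ℝ)⁻¹ ≤ crossNum S := by
  have h_inv : ∀ x ∈ S.map fun g => (addOrderOf g : ℝ)⁻¹, (n : ℝ)⁻¹ ≤ x := by
    simp only [Multiset.mem_map, forall_exists_index, and_imp, forall_apply_eq_imp_iff₂]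
    intro g hg
    have h_pos : 0 < addOrderOf g := Nat.pos_of_dvd_of_pos (hS g hg) (Nat.pos_of_ne_zero hn)
    have h_le : addOrderOf g ≤ n := Nat.le_of_dvd (Nat.pos_of_ne_zero hn) (hS g hg)
    exact inv_anti₀ (by exact_mod_cast h_pos) (by exact_mod_cast h_le)
  simpa [crossNum] using Multiset.card_nsmul_le_sum h_inv

theorem crossNum_of_addOrderOf_eq {n : ℕ} {S : Multiset G} (hS : ∀ g ∈ S, addOrderOf g = n) :
    crossNum S = S.card * (n : ℝ)⁻¹ := by
  rw [crossNum, Multiset.map_congr rfl fun g hg => by rw [hS g hg], Multiset.map_const',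
    Multiset.sum_replicate, nsmul_eq_mul]

end CrossNum

section ZeroSum
variable {G G' : Type*} [AddCommGroup G] [AddCommGroup G'] {S T : Multiset G}

theorem isZeroSumFree_zero : IsZeroSumFree (0 : Multiset G) :=
  fun _ hT hT0 => absurd (Multiset.le_zero.1 hT) hT0

theorem IsZeroSumFree.mono (hS : IsZeroSumFree S) (h : T ≤ S) : IsZeroSumFree T :=
  fun X hX => hS X (hX.trans h)

theorem IsZeroSumFree.eq_zero (hS : IsZeroSumFree S) (h : S.sum = 0) : S = 0 :=
  by_contra fun hS0 => hS S le_rfl hS0 h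

theorem isZeroSumFree_replicate {n : ℕ} {g : G} (h : n < addOrderOf g) :
    IsZeroSumFree (Multiset.replicate n g) := by
  intro T hT hT0 hsum
  obtain ⟨j, hj, rfl⟩ := Multiset.le_replicate_iff.1 hT
  rw [Multiset.sum_replicate] at hsum
  obtain rfl : j = 0 :=
    Nat.eq_zero_of_dvd_of_lt (addOrderOf_dvd_of_nsmul_eq_zero hsum) (hj.trans_lt h)
  exact hT0 (Multiset.replicate_zero g)

theorem IsMinZeroSum.isZeroSumFree_of_lt (hS : IsMinZeroSum S) (h : T < S) : IsZeroSumFree T :=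
  fun X hX hX0 => hS.2.2 X (hX.trans h.le) hX0 (hX.trans_lt h).ne

theorem IsMinZeroSum.isZeroSumFree_of_cons {g : G} (hS : IsMinZeroSum (g ::ₘ S)) :
    IsZeroSumFree S :=
  hS.isZeroSumFree_of_lt (Multiset.lt_cons_self S g)

theorem IsMinZeroSum.eq_of_le (hS : IsMinZeroSum S) (hT : T ≤ S) (hT0 : T ≠ 0)
    (hsum : T.sum = 0) : T = S :=
  by_contra fun hne => hS.2.2 T hT hT0 hne hsum

theorem IsMinZeroSum.ne_zero_of_add (h : IsMinZeroSum (S + T)) (hS : IsZeroSumFree S) :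
    T ≠ 0 := by
  rintro rfl
  rw [add_zero] at h
  exact h.1 (hS.eq_zero h.2.1)

theorem isMinZeroSum_singleton_zero : IsMinZeroSum ({0} : Multiset G) :=
  ⟨by simp, by simp, fun _ hT hT0 hne => absurd ((Multiset.le_singleton.1 hT).resolve_left hT0) hne⟩

theorem IsZeroSumFree.isMinZeroSum_neg_sum_cons (hS : IsZeroSumFree S) :
    IsMinZeroSum (-S.sum ::ₘ S) := by
  refine ⟨Multiset.cons_ne_zero, by simp, fun T hT hT0 hne hsum => ?_⟩
  by_cases hmem : -S.sum ∈ T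
  · obtain ⟨T', rfl⟩ := Multiset.exists_cons_of_mem hmem
    obtain ⟨W, rfl⟩ := Multiset.le_iff_exists_add.1 ((Multiset.cons_le_cons_iff _).1 hT)
    have hW : W.sum = 0 := by
      rw [Multiset.sum_cons, Multiset.sum_add] at hsum
      simpa [add_assoc] using hsum
    exact hne (by rw [(hS.mono (Multiset.le_add_left W T')).eq_zero hW, add_zero])
  · exact hS T ((Multiset.le_cons_of_notMem hmem).1 hT) hT0 hsum

theorem exists_isMinZeroSum_le_of_not_isZeroSumFree (hS : ¬ IsZeroSumFree S) :
    ∃ T ≤ S, IsMinZeroSum T := by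
  induction S using Multiset.strongInductionOn with | _ S ih =>
  by_cases h : ∀ T < S, IsZeroSumFree T
  · unfold IsZeroSumFree at hS
    push Not at hS
    obtain ⟨T, hTS, hT0, hsum⟩ := hS
    have h_eq : T = S := by_contra fun hne => h T (lt_of_le_of_ne hTS hne) T le_rfl hT0 hsum
    subst h_eq
    exact ⟨T, le_rfl, hT0, hsum, fun X hX hX0 hne => h X (lt_of_le_of_ne hX hne) X le_rfl hX0⟩
  · push Not at h
    obtain ⟨T, hTS, hT⟩ := h
    obtain ⟨X, hXT, hX⟩ := ih T hTS hT
    exact ⟨X, hXT.trans hTS.le, hX⟩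

theorem IsZeroSumFree.map (f : G →+ G') (hS : IsZeroSumFree S)
    (h : ∀ T ≤ S, f T.sum = 0 → T.sum = 0) : IsZeroSumFree (S.map f) := by
  intro Y hY hY0 hsum
  obtain ⟨T, hT, rfl⟩ := exists_le_map_eq_of_le_map hY
  rw [← map_multiset_sum] at hsum
  exact hS T hT (by simpa using hY0) (h T hT hsum)

theorem IsMinZeroSum.map (f : G →+ G') (hS : IsMinZeroSum S)
    (h : ∀ T ≤ S, f T.sum = 0 → T.sum = 0) : IsMinZeroSum (S.map f) := by
  refine ⟨by simpa using hS.1, ?_, fun Y hY hY0 hne hsum => ?_⟩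
  · rw [← map_multiset_sum, hS.2.1, map_zero]
  · obtain ⟨T, hT, rfl⟩ := exists_le_map_eq_of_le_map hY
    rw [← map_multiset_sum] at hsum
    exact hne (by rw [hS.eq_of_le hT (by simpa using hY0) (h T hT hsum)])

theorem sum_map_sum (B : Multiset (Multiset G)) : (B.map Multiset.sum).sum = B.sum.sum :=
  (map_multiset_sum (Multiset.sumAddMonoidHom : Multiset G →+ G) B).symm

theorem IsZeroSumFree.map_sum {B : Multiset (Multiset G)} (hB : ∀ T ∈ B, T ≠ 0)
    (h : IsZeroSumFree B.sum) : IsZeroSumFree (B.map Multiset.sum) := by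
  intro Y hY hY0 hsum
  obtain ⟨D, hD, rfl⟩ := exists_le_map_eq_of_le_map hY
  obtain ⟨E, rfl⟩ := Multiset.le_iff_exists_add.1 hD
  have hD0 : D.sum ≠ 0 :=
    sum_ne_zero_of_forall_ne_zero (by simpa using hY0) fun T hT => hB T (Multiset.mem_of_le hD hT)
  rw [Multiset.sum_add] at h
  exact h D.sum (Multiset.le_add_right _ _) hD0 ((sum_map_sum D).symm.trans hsum)

theorem IsMinZeroSum.map_sum {B : Multiset (Multiset G)} (hB : ∀ T ∈ B, T ≠ 0)
    (h : IsMinZeroSum B.sum) : IsMinZeroSum (B.map Multiset.sum) := by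
  refine ⟨?_, (sum_map_sum B).trans h.2.1, fun Y hY hY0 hne hsum => ?_⟩
  · rw [Ne, Multiset.map_eq_zero]
    rintro rfl
    exact h.1 rfl
  · obtain ⟨D, hD, rfl⟩ := exists_le_map_eq_of_le_map hY
    obtain ⟨E, rfl⟩ := Multiset.le_iff_exists_add.1 hD
    have hD0 : D.sum ≠ 0 :=
      sum_ne_zero_of_forall_ne_zero (by simpa using hY0) fun T hT => hB T (Multiset.mem_of_le hD hT)
    have h_eq : D.sum = (D + E).sum := by
      refine h.eq_of_le ?_ hD0 ((sum_map_sum D).symm.trans hsum)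
      rw [Multiset.sum_add]
      exact Multiset.le_add_right _ _
    have hE : E = 0 := by
      by_contra hE0
      refine sum_ne_zero_of_forall_ne_zero hE0 (fun T hT => hB T ?_) ?_
      · exact Multiset.mem_of_le (Multiset.le_add_left E D) hT
      · rwa [Multiset.sum_add, left_eq_add] at h_eq
    exact hne (by rw [hE, add_zero])

theorem IsZeroSumFree.card_lt_card {s : Finset G} (hS : IsZeroSumFree S)
    (hs : ∀ T ≤ S, T.sum ∈ s) : S.card < s.card := by
  induction S using Quotient.inductionOn with | _ l =>
  have h_inj : ∀ i j, i < j → j ≤ l.length → (l.take i).sum ≠ (l.take j).sum := by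
    intro i j hij hj h_eq
    have h_split := List.sum_take_add_sum_drop (l.take j) i
    rw [List.take_take, min_eq_left hij.le, h_eq, add_eq_left] at h_split
    refine hS ((l.take j).drop i) ?_ ?_ ?_
    · exact ((List.drop_sublist _ _).trans (List.take_sublist _ _)).subperm
    · simp only [ne_eq, Multiset.coe_eq_zero, List.drop_eq_nil_iff, List.length_take]
      omega
    · simpa using h_split
  have h_card := Finset.card_le_card_of_injOn (s := Finset.range (l.length + 1)) (t := s)
    (fun i => (l.take i).sum) ?_ ?_
  · simpa [Nat.succ_le_iff] using h_card
  · intro i _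
    simpa using hs (l.take i) (List.take_sublist _ _).subperm
  · intro i hi j hj h_eq
    simp only [Finset.coe_range, Set.mem_Iio] at hi hj
    rcases lt_trichotomy i j with h | h | h
    · exact absurd h_eq (h_inj i j h (by omega))
    · exact h
    · exact absurd h_eq.symm (h_inj j i h (by omega))

end ZeroSum

section Finite
variable {G : Type*} [AddCommGroup G] [Finite G] {S : Multiset G}

theorem IsZeroSumFree.count_lt_addOrderOf [DecidableEq G] (hS : IsZeroSumFree S) (g : G) :
    S.count g < addOrderOf g := by
  by_contra! h
  refine hS _ (Multiset.le_count_iff_replicate_le.1 h) ?_ ?_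
  · exact fun h0 => (addOrderOf_pos g).ne' (by simpa using congrArg Multiset.card h0)
  · rw [Multiset.sum_replicate, addOrderOf_nsmul_eq_zero]

theorem finite_setOf_isZeroSumFree : {S : Multiset G | IsZeroSumFree S}.Finite := by
  classical
  cases nonempty_fintype G
  refine (Set.finite_Iic (∑ g : G, Multiset.replicate (addOrderOf g) g)).subset fun S hS => ?_
  refine Multiset.le_iff_count.2 fun g => (hS.count_lt_addOrderOf g).le.trans ?_
  rw [Multiset.count_sum', Finset.sum_eq_single_of_mem g (Finset.mem_univ g)
    fun h _ hne => Multiset.count_eq_zero_of_notMem fun hm =>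
      hne (Multiset.eq_of_mem_replicate hm).symm, Multiset.count_replicate_self]

theorem finite_setOf_isMinZeroSum : {S : Multiset G | IsMinZeroSum S}.Finite := by
  refine (finite_setOf_isZeroSumFree.image2 (fun S g => g ::ₘ S) Set.finite_univ).subset
    fun S hS => ?_
  obtain ⟨g, hg⟩ := Multiset.exists_mem_of_ne_zero hS.1
  obtain ⟨T, rfl⟩ := Multiset.exists_cons_of_mem hg
  exact ⟨T, hS.isZeroSumFree_of_cons, g, Set.mem_univ g, rfl⟩

theorem crossNum_le_littleK (hS : IsZeroSumFree S) : crossNum S ≤ littleK G :=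
  le_csSup (finite_setOf_isZeroSumFree.image crossNum).bddAbove ⟨S, hS, rfl⟩

theorem crossNum_le_bigK (hS : IsMinZeroSum S) : crossNum S ≤ bigK G :=
  le_csSup (finite_setOf_isMinZeroSum.image crossNum).bddAbove ⟨S, hS, rfl⟩

variable (G) in
theorem littleK_nonneg : 0 ≤ littleK G := by
  simpa using crossNum_le_littleK (isZeroSumFree_zero (G := G))

variable (G) in
theorem exists_isZeroSumFree_crossNum_eq_littleK :
    ∃ S : Multiset G, IsZeroSumFree S ∧ crossNum S = littleK G :=
  Set.Nonempty.csSup_mem (s := {x | ∃ S : Multiset G, IsZeroSumFree S ∧ crossNum S = x})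
    ⟨_, 0, isZeroSumFree_zero, rfl⟩ (finite_setOf_isZeroSumFree.image crossNum)

theorem littleK_le {G : Type*} [AddCommGroup G] {b : ℝ}
    (h : ∀ S : Multiset G, IsZeroSumFree S → crossNum S ≤ b) : littleK G ≤ b :=
  csSup_le ⟨_, 0, isZeroSumFree_zero, rfl⟩ fun _ ⟨S, hS, hx⟩ => hx ▸ h S hS

theorem bigK_le {G : Type*} [AddCommGroup G] {b : ℝ}
    (h : ∀ S : Multiset G, IsMinZeroSum S → crossNum S ≤ b) : bigK G ≤ b :=
  csSup_le ⟨_, {0}, isMinZeroSum_singleton_zero, rfl⟩ fun _ ⟨S, hS, hx⟩ => hx ▸ h S hS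

theorem inv_exponent_le_inv_addOrderOf (g : G) :
    (AddMonoid.exponent G : ℝ)⁻¹ ≤ (addOrderOf g : ℝ)⁻¹ := by
  have h_le : addOrderOf g ≤ AddMonoid.exponent G :=
    Nat.le_of_dvd (AddMonoid.exponent_pos.2 .of_finite) (AddMonoid.addOrder_dvd_exponent g)
  exact inv_anti₀ (by exact_mod_cast addOrderOf_pos g) (by exact_mod_cast h_le)

theorem addOrderOf_eq_exponent_of_inv_le {g : G}
    (h : (addOrderOf g : ℝ)⁻¹ ≤ (AddMonoid.exponent G : ℝ)⁻¹) :
    addOrderOf g = AddMonoid.exponent G := by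
  have h_inv := le_antisymm h (inv_exponent_le_inv_addOrderOf g)
  exact_mod_cast inv_injective h_inv

theorem inv_addOrderOf_le_two_inv {g : G} (hg : g ≠ 0) : (addOrderOf g : ℝ)⁻¹ ≤ 2⁻¹ := by
  have h_two : 2 ≤ addOrderOf g :=
    (Nat.two_le_iff _).2 ⟨(addOrderOf_pos g).ne', mt AddMonoid.addOrderOf_eq_one_iff.1 hg⟩
  exact inv_anti₀ two_pos (by exact_mod_cast h_two)

variable (G) in
theorem inv_exponent_pos : 0 < (AddMonoid.exponent G : ℝ)⁻¹ :=
  inv_pos.2 (by exact_mod_cast AddMonoid.exponent_pos.2 .of_finite)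

variable (G) in
theorem inv_exponent_lt_one [Nontrivial G] : (AddMonoid.exponent G : ℝ)⁻¹ < 1 :=
  inv_lt_one_of_one_lt₀ (by exact_mod_cast AddMonoid.one_lt_exponent)

variable (G) in
theorem littleK_add_inv_exponent_le_bigK :
    littleK G + (AddMonoid.exponent G : ℝ)⁻¹ ≤ bigK G := by
  obtain ⟨S, hS, hS_max⟩ := exists_isZeroSumFree_crossNum_eq_littleK G
  have h_le := crossNum_le_bigK hS.isMinZeroSum_neg_sum_cons
  rw [crossNum_cons, hS_max] at h_le
  linarith [inv_exponent_le_inv_addOrderOf (-S.sum)]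

variable (G) in
theorem one_sub_inv_exponent_le_littleK : 1 - (AddMonoid.exponent G : ℝ)⁻¹ ≤ littleK G := by
  obtain ⟨g, hg⟩ := AddMonoid.exists_addOrderOf_eq_exponent (G := G) .of_finite
  have h_pos := addOrderOf_pos g
  have h_free : IsZeroSumFree (Multiset.replicate (addOrderOf g - 1) g) :=
    isZeroSumFree_replicate (Nat.sub_one_lt_of_lt h_pos)
  have h_le := crossNum_le_littleK h_free
  rwa [crossNum_replicate, Nat.cast_sub h_pos, Nat.cast_one, sub_mul, one_mul,
    mul_inv_cancel₀ (by exact_mod_cast h_pos.ne'), hg] at h_le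

theorem littleK_eq_one_sub_inv_exponent (hG : bigK G ≤ 1) :
    littleK G = 1 - (AddMonoid.exponent G : ℝ)⁻¹ :=
  le_antisymm (by linarith [littleK_add_inv_exponent_le_bigK G])
    (one_sub_inv_exponent_le_littleK G)

theorem addOrderOf_neg_sum_eq_exponent
    (hG : bigK G ≤ 1) (hS : IsZeroSumFree S) (hmax : crossNum S = littleK G) :
    addOrderOf (-S.sum) = AddMonoid.exponent G := by
  refine addOrderOf_eq_exponent_of_inv_le ?_
  have h_le := crossNum_le_bigK hS.isMinZeroSum_neg_sum_cons
  rw [crossNum_cons, hmax, littleK_eq_one_sub_inv_exponent hG] at h_le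
  linarith

theorem IsZeroSumFree.exists_le_sum_eq
    (hS : IsZeroSumFree S) (hmax : crossNum S = littleK G) (c : G) : ∃ T ≤ S, T.sum = c := by
  by_contra! h
  have h_free : IsZeroSumFree (-c ::ₘ S) := by
    intro T hT hT0 hsum
    by_cases hmem : -c ∈ T
    · obtain ⟨T, rfl⟩ := Multiset.exists_cons_of_mem hmem
      refine h T ((Multiset.cons_le_cons_iff _).1 hT) ?_
      rwa [Multiset.sum_cons, neg_add_eq_zero, eq_comm] at hsum
    · exact hS T ((Multiset.le_cons_of_notMem hmem).1 hT) hT0 hsum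
  have h_le := crossNum_le_littleK h_free
  have h_pos : (0 : ℝ) < (addOrderOf (-c) : ℝ)⁻¹ :=
    inv_pos.2 (by exact_mod_cast addOrderOf_pos (-c))
  rw [crossNum_cons, hmax] at h_le
  linarith

theorem exists_eq_cons_of_card_lt_crossNum_add_one
    (hS : S.card < crossNum S + 1) (hsum : S.sum ≠ 0) :
    ∃ (g : G) (T : Multiset G), S = g ::ₘ T ∧ ∀ x ∈ T, x = 0 := by
  obtain ⟨g, hgS, hg⟩ : ∃ g ∈ S, g ≠ 0 := by
    by_contra! h
    exact hsum (Multiset.sum_eq_zero h)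
  obtain ⟨T, rfl⟩ := Multiset.exists_cons_of_mem hgS
  refine ⟨g, T, rfl, fun x hxT => by_contra fun hx => ?_⟩
  obtain ⟨W, rfl⟩ := Multiset.exists_cons_of_mem hxT
  rw [crossNum_cons, crossNum_cons, Multiset.card_cons, Multiset.card_cons] at hS
  push_cast at hS
  linarith [inv_addOrderOf_le_two_inv hg, inv_addOrderOf_le_two_inv hx, crossNum_le_card W]

theorem littleK_add_littleK_le_littleK_prod (H C : Type*) [AddCommGroup H] [AddCommGroup C]
    [Finite H] [Finite C] : littleK H + littleK C ≤ littleK (H × C) := by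
  obtain ⟨S, hS, hS_max⟩ := exists_isZeroSumFree_crossNum_eq_littleK H
  obtain ⟨T, hT, hT_max⟩ := exists_isZeroSumFree_crossNum_eq_littleK C
  set inl := AddMonoidHom.inl H C
  set inr := AddMonoidHom.inr H C
  have h_free : IsZeroSumFree (S.map inl + T.map inr) := by
    intro X hX hX0 hsum
    obtain ⟨_, hXS, _, hXT, rfl⟩ := exists_le_le_add_eq_of_le_add hX
    obtain ⟨S', hS', rfl⟩ := exists_le_map_eq_of_le_map hXS
    obtain ⟨T', hT', rfl⟩ := exists_le_map_eq_of_le_map hXT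
    rw [Multiset.sum_add, ← map_multiset_sum, ← map_multiset_sum] at hsum
    obtain ⟨hS'_sum, hT'_sum⟩ : S'.sum = 0 ∧ T'.sum = 0 := by simpa [inl, inr] using hsum
    rw [(hS.mono hS').eq_zero hS'_sum, (hT.mono hT').eq_zero hT'_sum] at hX0
    simp at hX0
  have h_le := crossNum_le_littleK h_free
  rwa [crossNum_add, crossNum_map_of_injective inl (Prod.mk_left_injective 0),
    crossNum_map_of_injective inr (Prod.mk_right_injective 0), hS_max, hT_max] at h_le

end Finite

section AddOrdersTotal

/-- The orders of the elements of `G` are linearly ordered by divisibility, as in a `p`-group.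
This makes an element of least order in a sequence have an order dividing all the others, and an
element of greatest order have an order divisible by all the others. -/
def AddOrdersTotal (G : Type*) [AddCommGroup G] : Prop :=
  ∀ a b : G, addOrderOf a ∣ addOrderOf b ∨ addOrderOf b ∣ addOrderOf a

variable {G : Type*} [AddCommGroup G]

theorem addOrdersTotal_of_exponent_eq_prime_pow {p k : ℕ} (hp : p.Prime)
    (h : AddMonoid.exponent G = p ^ k) : AddOrdersTotal G := by
  have h_pow (g : G) : ∃ i, addOrderOf g = p ^ i := by
    obtain ⟨i, -, hi⟩ := (Nat.dvd_prime_pow hp).1 (h ▸ AddMonoid.addOrder_dvd_exponent g)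
    exact ⟨i, hi⟩
  intro a b
  obtain ⟨i, hi⟩ := h_pow a
  obtain ⟨j, hj⟩ := h_pow b
  rw [hi, hj]
  exact (le_total i j).imp (pow_dvd_pow p) (pow_dvd_pow p)

theorem AddOrdersTotal.dvd_of_le [Finite G] (hG : AddOrdersTotal G) {a b : G}
    (h : addOrderOf a ≤ addOrderOf b) : addOrderOf a ∣ addOrderOf b :=
  (hG a b).elim id fun h_dvd =>
    (h.antisymm (Nat.le_of_dvd (addOrderOf_pos a) h_dvd)).dvd

theorem addOrderOf_sum_dvd {n : ℕ} {S : Multiset G} (hS : ∀ g ∈ S, addOrderOf g ∣ n) :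
    addOrderOf S.sum ∣ n := by
  induction S using Multiset.induction_on with
  | empty => simp
  | cons g S ih =>
    obtain ⟨hg, hS⟩ := Multiset.forall_mem_cons.1 hS
    rw [Multiset.sum_cons]
    exact (AddCommute.all g S.sum).addOrderOf_add_dvd_lcm.trans (Nat.lcm_dvd hg (ih hS))

theorem IsZeroSumFree.add_replicate {n d : ℕ} {e : G} {S : Multiset G} (hS : IsZeroSumFree S)
    (hSn : ∀ g ∈ S, addOrderOf g ∣ n) (hn : n ≠ 0) (he : addOrderOf e = n * d) (hd : d ≠ 0) :
    IsZeroSumFree (S + Multiset.replicate (d - 1) e) := by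
  intro X hX hX0 hsum
  obtain ⟨T, hT, Y, hY, rfl⟩ := exists_le_le_add_eq_of_le_add hX
  obtain ⟨j, hj, rfl⟩ := Multiset.le_replicate_iff.1 hY
  rw [Multiset.sum_add, Multiset.sum_replicate] at hsum
  have hT_nsmul : n • T.sum = 0 := addOrderOf_dvd_iff_nsmul_eq_zero.1
    (addOrderOf_sum_dvd fun g hg => hSn g (Multiset.mem_of_le hT hg))
  have hj_nsmul : (n * j) • e = 0 := by
    have h := congrArg (n • ·) hsum
    simpa only [smul_add, hT_nsmul, zero_add, smul_zero, mul_nsmul'] using h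
  have hdj : d ∣ j := by
    have h := addOrderOf_dvd_of_nsmul_eq_zero hj_nsmul
    rw [he] at h
    exact Nat.dvd_of_mul_dvd_mul_left (Nat.pos_of_ne_zero hn) h
  obtain rfl : j = 0 := Nat.eq_zero_of_dvd_of_lt hdj (by omega)
  rw [zero_nsmul, add_zero] at hsum
  exact hX0 (by rw [(hS.mono hT).eq_zero hsum, Multiset.replicate_zero, add_zero])

theorem AddOrdersTotal.bigK_le_littleK_add_inv_exponent [Finite G] (hG : AddOrdersTotal G) :
    bigK G ≤ littleK G + (AddMonoid.exponent G : ℝ)⁻¹ := by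
  refine bigK_le fun S hS => ?_
  obtain ⟨e, he⟩ := AddMonoid.exists_addOrderOf_eq_exponent (G := G) .of_finite
  obtain ⟨g, hgS, hg_max⟩ := Multiset.exists_max_image addOrderOf hS.1
  obtain ⟨S, rfl⟩ := Multiset.exists_cons_of_mem hgS
  obtain ⟨d, hd⟩ := he ▸ AddMonoid.addOrder_dvd_exponent g
  have hn : addOrderOf g ≠ 0 := (addOrderOf_pos g).ne'
  have hd0 : d ≠ 0 := by
    rintro rfl
    exact (addOrderOf_pos e).ne' (by rw [hd, mul_zero])
  have h_free := hS.isZeroSumFree_of_cons.add_replicate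
    (fun x hx => hG.dvd_of_le (hg_max x (Multiset.mem_cons_of_mem hx))) hn hd hd0
  have h_le := crossNum_le_littleK h_free
  rw [crossNum_add, crossNum_replicate, hd, Nat.cast_sub (Nat.pos_of_ne_zero hd0)] at h_le
  have h_cancel : (d : ℝ) * (addOrderOf g * d : ℝ)⁻¹ = (addOrderOf g : ℝ)⁻¹ := by
    field_simp
  rw [crossNum_cons, ← he, hd]
  push_cast at h_le ⊢
  linarith

end AddOrdersTotal

section Block
variable {G C : Type*} [AddCommGroup G] [AddCommGroup C] {f : G →+ C} {T : Multiset G}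

/-- A block of a homomorphism `f` is a sequence whose image is a minimal zero-sum sequence.
Replacing each block by its sum turns a sequence over `G` into one over the kernel of `f`. -/
def IsBlock (f : G →+ C) (T : Multiset G) : Prop :=
  IsMinZeroSum (T.map f)

theorem IsBlock.ne_zero (hT : IsBlock f T) : T ≠ 0 := by
  rintro rfl
  exact hT.1 rfl

theorem IsBlock.map_sum (hT : IsBlock f T) : f T.sum = 0 :=
  (map_multiset_sum f T).trans hT.2.1

theorem map_sum_sum_of_isBlock {B : Multiset (Multiset G)} (hB : ∀ T ∈ B, IsBlock f T) :
    f B.sum.sum = 0 := by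
  rw [← sum_map_sum, map_multiset_sum, Multiset.map_map]
  refine Multiset.sum_eq_zero fun x hx => ?_
  obtain ⟨T, hT, rfl⟩ := Multiset.mem_map.1 hx
  exact (hB T hT).map_sum

theorem IsBlock.isZeroSumFree_map_of_lt {X : Multiset G} (hT : IsBlock f T) (h : X < T) :
    IsZeroSumFree (X.map f) :=
  hT.isZeroSumFree_of_lt (Multiset.map_strictMono f h)

theorem IsZeroSumFree.map_ne_zero {R : Multiset G} (hR : IsZeroSumFree (R.map f)) {g : G}
    (hg : g ∈ R) : f g ≠ 0 := by
  simpa using hR {f g} (Multiset.singleton_le.2 (Multiset.mem_map_of_mem f hg))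

theorem exists_blocks (f : G →+ C) (V : Multiset G) :
    ∃ (B : Multiset (Multiset G)) (R : Multiset G),
      V = B.sum + R ∧ (∀ T ∈ B, IsBlock f T) ∧ IsZeroSumFree (R.map f) := by
  obtain ⟨B, R, hV, hB, hR⟩ := exists_eq_sum_add_of_greedy (IsBlock f) V
  refine ⟨B, R, hV, hB, by_contra fun h => ?_⟩
  obtain ⟨X, hX, hX_min⟩ := exists_isMinZeroSum_le_of_not_isZeroSumFree h
  obtain ⟨T, hT, rfl⟩ := exists_le_map_eq_of_le_map hX
  exact hR T hT (IsBlock.ne_zero hX_min) hX_min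

end Block

section Cyclic
variable {G : Type*} [AddCommGroup G] [Finite G] [IsAddCyclic G] {S T : Multiset G}

theorem IsZeroSumFree.card_lt_of_nsmul_eq_zero {n : ℕ} (hn : 0 < n) (hS : IsZeroSumFree S)
    (h : ∀ g ∈ S, n • g = 0) : S.card < n := by
  classical
  cases nonempty_fintype G
  refine (hS.card_lt_card (s := {g | n • g = 0}) fun T hT => ?_).trans_le
    (IsAddCyclic.card_nsmul_eq_zero_le hn)
  have h_sum : addOrderOf T.sum ∣ n := addOrderOf_sum_dvd fun g hg =>
    addOrderOf_dvd_of_nsmul_eq_zero (h g (Multiset.mem_of_le hT hg))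
  simpa using addOrderOf_dvd_iff_nsmul_eq_zero.1 h_sum

variable {q j : ℕ}

theorem IsZeroSumFree.card_lt_of_map_nsmul (hq : q.Prime)
    (hS : IsZeroSumFree (S.map (nsmulAddMonoidHom (α := G) (q ^ j))))
    (h : ∀ g ∈ S, addOrderOf g ∣ q ^ (j + 1)) : S.card < q := by
  rw [← Multiset.card_map (nsmulAddMonoidHom (α := G) (q ^ j)) S]
  refine hS.card_lt_of_nsmul_eq_zero hq.pos fun x hx => ?_
  obtain ⟨g, hg, rfl⟩ := Multiset.mem_map.1 hx
  rw [nsmulAddMonoidHom_apply, ← mul_nsmul, ← pow_succ]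
  exact addOrderOf_dvd_iff_nsmul_eq_zero.1 (h g hg)

theorem crossNum_le_inv_addOrderOf_sum_of_isBlock (hq : q.Prime)
    (hT : IsBlock (nsmulAddMonoidHom (α := G) (q ^ j)) T)
    (h : ∀ g ∈ T, addOrderOf g ∣ q ^ (j + 1)) : crossNum T ≤ (addOrderOf T.sum : ℝ)⁻¹ := by
  have : Fact q.Prime := ⟨hq⟩
  by_cases h0 : ∃ g ∈ T, q ^ j • g = 0
  · obtain ⟨g, hg, hg0⟩ := h0
    have h_single : {g} = T := by
      refine (Multiset.singleton_le.2 hg).eq_or_lt.resolve_right fun hlt => ?_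
      exact (hT.isZeroSumFree_map_of_lt hlt).map_ne_zero (Multiset.mem_singleton_self g) hg0
    rw [← h_single, Multiset.sum_singleton, ← Multiset.cons_zero, crossNum_cons, crossNum_zero,
      add_zero]
  · push Not at h0
    have h_ord : ∀ g ∈ T, addOrderOf g = q ^ (j + 1) := fun g hg =>
      addOrderOf_eq_prime_pow (h0 g hg) (addOrderOf_dvd_iff_nsmul_eq_zero.1 (h g hg))
    have h_card : T.card ≤ q := by
      obtain ⟨g, hg⟩ := Multiset.exists_mem_of_ne_zero hT.ne_zero
      obtain ⟨T, rfl⟩ := Multiset.exists_cons_of_mem hg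
      rw [Multiset.card_cons]
      exact (hT.isZeroSumFree_map_of_lt (Multiset.lt_cons_self T g)).card_lt_of_map_nsmul hq
        fun x hx => h x (Multiset.mem_cons_of_mem hx)
    have h_sum : addOrderOf T.sum ≤ q ^ j :=
      Nat.le_of_dvd (pow_pos hq.pos j) (addOrderOf_dvd_of_nsmul_eq_zero hT.map_sum)
    have hq0 : (0 : ℝ) < q := by exact_mod_cast hq.pos
    calc crossNum T = T.card * ((q ^ (j + 1) : ℕ) : ℝ)⁻¹ := crossNum_of_addOrderOf_eq h_ord
      _ ≤ q * ((q ^ (j + 1) : ℕ) : ℝ)⁻¹ := by gcongr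
      _ = ((q ^ j : ℕ) : ℝ)⁻¹ := by push_cast; field_simp; ring
      _ ≤ (addOrderOf T.sum : ℝ)⁻¹ :=
        inv_anti₀ (by exact_mod_cast addOrderOf_pos T.sum) (by exact_mod_cast h_sum)

/-- The blocks of multiplication by `q ^ j` lose no cross number when they are replaced by their
sums, which have order dividing `q ^ j`. -/
theorem IsZeroSumFree.crossNum_le_one_sub_inv_pow (hq : q.Prime) (hS : IsZeroSumFree S)
    (h : ∀ g ∈ S, addOrderOf g ∣ q ^ j) : crossNum S ≤ 1 - ((q : ℝ) ^ j)⁻¹ := by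
  have : Fact q.Prime := ⟨hq⟩
  induction j generalizing S with
  | zero =>
    have h_sum : S.sum = 0 := by simpa using addOrderOf_sum_dvd h
    simp [hS.eq_zero h_sum]
  | succ j ih =>
    obtain ⟨B, R, rfl, hB, hR⟩ := exists_blocks (nsmulAddMonoidHom (α := G) (q ^ j)) S
    have hB_sums : crossNum B.sum ≤ crossNum (B.map Multiset.sum) := by
      rw [crossNum_sum, crossNum, Multiset.map_map]
      refine Multiset.sum_map_le_sum_map _ _ fun T hT => ?_
      refine crossNum_le_inv_addOrderOf_sum_of_isBlock hq (hB T hT) fun g hg => h g ?_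
      exact Multiset.mem_add.2 (.inl (Multiset.mem_of_le (Multiset.le_sum_of_mem hT) hg))
    have hB_le : crossNum (B.map Multiset.sum) ≤ 1 - ((q : ℝ) ^ j)⁻¹ := by
      refine ih ((hS.mono (Multiset.le_add_right _ R)).map_sum fun T hT => (hB T hT).ne_zero) ?_
      intro x hx
      obtain ⟨T, hT, rfl⟩ := Multiset.mem_map.1 hx
      exact addOrderOf_dvd_of_nsmul_eq_zero (hB T hT).map_sum
    have hR_dvd : ∀ g ∈ R, addOrderOf g ∣ q ^ (j + 1) := fun g hg =>
      h g (Multiset.mem_add.2 (.inr hg))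
    have hR_le : crossNum R ≤ (q - 1) * ((q : ℝ) ^ (j + 1))⁻¹ := by
      have h_card : (R.card : ℝ) + 1 ≤ q := by exact_mod_cast hR.card_lt_of_map_nsmul hq hR_dvd
      rw [crossNum_of_addOrderOf_eq fun g hg => addOrderOf_eq_prime_pow (hR.map_ne_zero hg)
        (addOrderOf_dvd_iff_nsmul_eq_zero.1 (hR_dvd g hg))]
      push_cast
      gcongr
      linarith
    have h_pow : (q : ℝ) * ((q : ℝ) ^ (j + 1))⁻¹ = ((q : ℝ) ^ j)⁻¹ := by
      have hq0 : (q : ℝ) ≠ 0 := by exact_mod_cast hq.ne_zero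
      rw [pow_succ]
      field_simp
    rw [crossNum_add]
    linarith

theorem bigK_le_one_of_card_eq_prime_pow (hq : q.Prime) (hG : Nat.card G = q ^ j) :
    bigK G ≤ 1 := by
  have h_exp : AddMonoid.exponent G = q ^ j := IsAddCyclic.exponent_eq_card.trans hG
  have h_little : littleK G ≤ 1 - ((q : ℝ) ^ j)⁻¹ := littleK_le fun S hS =>
    hS.crossNum_le_one_sub_inv_pow hq fun g _ => h_exp ▸ AddMonoid.addOrder_dvd_exponent g
  have h_big :=
    (addOrdersTotal_of_exponent_eq_prime_pow hq h_exp).bigK_le_littleK_add_inv_exponent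
  rw [h_exp, Nat.cast_pow] at h_big
  linarith

end Cyclic

section Prod
variable {H C : Type*} [AddCommGroup H] [AddCommGroup C]

theorem addOrderOf_eq_mul_of_coprime_exponent
    (hco : (AddMonoid.exponent H).Coprime (AddMonoid.exponent C)) (x : H × C) :
    addOrderOf x = addOrderOf x.1 * addOrderOf x.2 := by
  rw [Prod.addOrderOf]
  exact (hco.of_dvd (AddMonoid.addOrder_dvd_exponent _)
    (AddMonoid.addOrder_dvd_exponent _)).lcm_eq_mul

theorem crossNum_eq_inv_mul_of_addOrderOf_fst_eq
    (hco : (AddMonoid.exponent H).Coprime (AddMonoid.exponent C)) {n : ℕ} {X : Multiset (H × C)}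
    (hX : ∀ x ∈ X, addOrderOf x.1 = n) :
    crossNum X = (n : ℝ)⁻¹ * crossNum (X.map Prod.snd) := by
  rw [crossNum, crossNum, Multiset.map_map, ← Multiset.sum_map_mul_left]
  refine congrArg _ (Multiset.map_congr rfl fun x hx => ?_)
  rw [addOrderOf_eq_mul_of_coprime_exponent hco, hX x hx, Nat.cast_mul, mul_inv, Function.comp]

theorem crossNum_eq_crossNum_map_snd
    (hco : (AddMonoid.exponent H).Coprime (AddMonoid.exponent C)) {T : Multiset (H × C)}
    (h : ∀ x ∈ T, x.1 = 0) :
    crossNum T = crossNum (T.map Prod.snd) := by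
  have h_one : ∀ x ∈ T, addOrderOf x.1 = 1 := fun x hx => by rw [h x hx, addOrderOf_zero]
  simpa using crossNum_eq_inv_mul_of_addOrderOf_fst_eq hco h_one

theorem fst_sum_eq_zero {T : Multiset (H × C)} (h : ∀ x ∈ T, x.1 = 0) : T.sum.1 = 0 := by
  rw [Multiset.fst_sum]
  refine Multiset.sum_eq_zero fun y hy => ?_
  obtain ⟨x, hx, rfl⟩ := Multiset.mem_map.1 hy
  exact h x hx

theorem snd_sum_eq_zero {T : Multiset (H × C)} (h : ∀ x ∈ T, x.2 = 0) : T.sum.2 = 0 := by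
  rw [Multiset.snd_sum]
  refine Multiset.sum_eq_zero fun y hy => ?_
  obtain ⟨x, hx, rfl⟩ := Multiset.mem_map.1 hy
  exact h x hx

theorem isZeroSumFree_map_snd {T : Multiset (H × C)} (hT : IsZeroSumFree T)
    (h : ∀ x ∈ T, x.1 = 0) : IsZeroSumFree (T.map Prod.snd) :=
  hT.map (AddMonoidHom.snd H C) fun _ hX hX_sum =>
    Prod.ext (fst_sum_eq_zero fun x hx => h x (Multiset.mem_of_le hX hx)) hX_sum

theorem isMinZeroSum_map_snd {T : Multiset (H × C)} (hT : IsMinZeroSum T)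
    (h : ∀ x ∈ T, x.1 = 0) : IsMinZeroSum (T.map Prod.snd) :=
  hT.map (AddMonoidHom.snd H C) fun _ hX hX_sum =>
    Prod.ext (fst_sum_eq_zero fun x hx => h x (Multiset.mem_of_le hX hx)) hX_sum

/-- The sequence over `H` of the first components of the sums of the members of `B`. When the
members are blocks of the second projection, this carries their sums completely. -/
def fstSums (B : Multiset (Multiset (H × C))) : Multiset H :=
  (B.map Multiset.sum).map (AddMonoidHom.fst H C)

theorem fstSums_add (B D : Multiset (Multiset (H × C))) :
    fstSums (B + D) = fstSums B + fstSums D := by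
  simp only [fstSums, Multiset.map_add]

theorem IsMinZeroSum.fstSums {B : Multiset (Multiset (H × C))} (hU : IsMinZeroSum B.sum)
    (hB : ∀ T ∈ B, IsBlock (AddMonoidHom.snd H C) T) : IsMinZeroSum (fstSums B) := by
  refine (hU.map_sum fun T hT => (hB T hT).ne_zero).map _ fun Y hY hY0 => Prod.ext hY0 ?_
  obtain ⟨D, hD, rfl⟩ := exists_le_map_eq_of_le_map hY
  rw [sum_map_sum]
  exact map_sum_sum_of_isBlock fun T hT => hB T (Multiset.mem_of_le hD hT)

theorem card_mul_inv_le_crossNum_fstSums {B : Multiset (Multiset (H × C))} {n : ℕ} (hn : n ≠ 0)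
    (h : ∀ x ∈ B.sum, addOrderOf x.1 ∣ n) : B.card * (n : ℝ)⁻¹ ≤ crossNum (fstSums B) := by
  have h_dvd : ∀ y ∈ fstSums B, addOrderOf y ∣ n := by
    intro y hy
    obtain ⟨_, hz, rfl⟩ := Multiset.mem_map.1 hy
    obtain ⟨T, hT, rfl⟩ := Multiset.mem_map.1 hz
    rw [map_multiset_sum]
    refine addOrderOf_sum_dvd fun y hy => ?_
    obtain ⟨x, hx, rfl⟩ := Multiset.mem_map.1 hy
    exact h x (Multiset.mem_of_le (Multiset.le_sum_of_mem hT) hx)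
  simpa only [fstSums, Multiset.card_map] using card_mul_inv_le_crossNum hn h_dvd

theorem card_sub_crossNum_map_snd_mul_inv_le
    (hco : (AddMonoid.exponent H).Coprime (AddMonoid.exponent C)) [Finite H]
    (V : Multiset (H × C)) :
    (AddMonoid.exponent H : ℝ)⁻¹ * (V.card - crossNum (V.map Prod.snd)) ≤
      crossNum (V.map Prod.fst) - crossNum V := by
  induction V using Multiset.induction_on with
  | empty => simp
  | cons x V ih =>
    have h_le : (AddMonoid.exponent H : ℝ)⁻¹ * (1 - (addOrderOf x.2 : ℝ)⁻¹) ≤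
        (addOrderOf x.1 : ℝ)⁻¹ * (1 - (addOrderOf x.2 : ℝ)⁻¹) :=
      mul_le_mul_of_nonneg_right (inv_exponent_le_inv_addOrderOf x.1)
        (sub_nonneg.2 (Nat.cast_inv_le_one _))
    simp only [Multiset.map_cons, crossNum_cons, Multiset.card_cons,
      addOrderOf_eq_mul_of_coprime_exponent hco, Nat.cast_mul, Nat.cast_succ, mul_inv]
    linarith

variable [Finite C]

theorem crossNum_map_snd_sum_le_card (hC : bigK C ≤ 1) {B : Multiset (Multiset (H × C))}
    (hB : ∀ T ∈ B, IsBlock (AddMonoidHom.snd H C) T) :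
    crossNum (B.sum.map Prod.snd) ≤ B.card := by
  induction B using Multiset.induction_on with
  | empty => simp
  | cons T B ih =>
    obtain ⟨hT, hB⟩ := Multiset.forall_mem_cons.1 hB
    have hT_le : crossNum (T.map Prod.snd) ≤ 1 := (crossNum_le_bigK hT).trans hC
    rw [Multiset.sum_cons, Multiset.map_add, crossNum_add, Multiset.card_cons]
    push_cast
    linarith [ih hB]

theorem exists_blocks_of_addOrderOf_fst_eq
    (hco : (AddMonoid.exponent H).Coprime (AddMonoid.exponent C)) (hC : bigK C ≤ 1) {n : ℕ}
    (hn : n ≠ 0) {R X : Multiset (H × C)} (hR : ∀ x ∈ R, addOrderOf x.1 ∣ n)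
    (hX : ∀ x ∈ X, addOrderOf x.1 = n) :
    ∃ (B : Multiset (Multiset (H × C))) (R' : Multiset (H × C)),
      R + X = B.sum + R' ∧ (∀ T ∈ B, IsBlock (AddMonoidHom.snd H C) T) ∧
      IsZeroSumFree (R'.map Prod.snd) ∧
      crossNum X + (n : ℝ)⁻¹ * crossNum (R.map Prod.snd) ≤
        crossNum (fstSums B) + (n : ℝ)⁻¹ * crossNum (R'.map Prod.snd) := by
  obtain ⟨B, R', h_eq, hB, hR'⟩ := exists_blocks (AddMonoidHom.snd H C) (R + X)
  refine ⟨B, R', h_eq, hB, hR', ?_⟩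
  have h_dvd : ∀ x ∈ B.sum, addOrderOf x.1 ∣ n := by
    intro x hx
    have hx' : x ∈ R + X := h_eq ▸ Multiset.mem_add.2 (.inl hx)
    exact (Multiset.mem_add.1 hx').elim (hR x) fun h => (hX x h).dvd
  have h_split : crossNum (R.map Prod.snd) + crossNum (X.map Prod.snd) =
      crossNum (B.sum.map Prod.snd) + crossNum (R'.map Prod.snd) := by
    simp only [← crossNum_add, ← Multiset.map_add, h_eq]
  calc crossNum X + (n : ℝ)⁻¹ * crossNum (R.map Prod.snd)
      = crossNum (B.sum.map Prod.snd) * (n : ℝ)⁻¹ +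
          (n : ℝ)⁻¹ * crossNum (R'.map Prod.snd) := by
        rw [crossNum_eq_inv_mul_of_addOrderOf_fst_eq hco hX]
        linear_combination (n : ℝ)⁻¹ * h_split
    _ ≤ B.card * (n : ℝ)⁻¹ + (n : ℝ)⁻¹ * crossNum (R'.map Prod.snd) := by
        gcongr
        exact crossNum_map_snd_sum_le_card hC hB
    _ ≤ _ := by
        gcongr
        exact card_mul_inv_le_crossNum_fstSums hn h_dvd

/-- A stage of the successive extraction of blocks from a sequence over `H × C`: the remainder `R`
has a zero-sum free projection to `C` and lives in the `n`-torsion over `H`, whereas the first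
components of the elements of `V`, not yet treated, have orders divisible by `n`. -/
structure IsStage (n : ℕ) (R V : Multiset (H × C)) : Prop where
  isZeroSumFree_map_snd : IsZeroSumFree (R.map Prod.snd)
  dvd_exponent : n ∣ AddMonoid.exponent H
  addOrderOf_fst_dvd : ∀ x ∈ R, addOrderOf x.1 ∣ n
  dvd_addOrderOf_fst : ∀ x ∈ V, n ∣ addOrderOf x.1
  sum_snd : (R + V).sum.2 = 0

variable [Finite H] {n : ℕ} {R V : Multiset (H × C)}

theorem IsStage.exists_next (hco : (AddMonoid.exponent H).Coprime (AddMonoid.exponent C))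
    (hH : AddOrdersTotal H) (hC : bigK C ≤ 1) (h : IsStage n R V) (hV : V ≠ 0) :
    ∃ (n' : ℕ) (B : Multiset (Multiset (H × C))) (R' W : Multiset (H × C)),
      IsStage n' R' W ∧ W < V ∧ R + V = B.sum + (R' + W) ∧
      (∀ T ∈ B, IsBlock (AddMonoidHom.snd H C) T) ∧
      crossNum V + (n : ℝ)⁻¹ * (crossNum (R.map Prod.snd) - littleK C) ≤
        crossNum (fstSums B) +
          (crossNum W + (n' : ℝ)⁻¹ * (crossNum (R'.map Prod.snd) - littleK C)) := by
  obtain ⟨v, hvV, hv_min⟩ := Multiset.exists_min_image (fun x => addOrderOf x.1) hV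
  set n' := addOrderOf v.1
  have hn' : 0 < n' := addOrderOf_pos v.1
  have hnn' : n ∣ n' := h.dvd_addOrderOf_fst v hvV
  obtain ⟨X, W, rfl, hWV, hX⟩ :
      ∃ X W, X + W = V ∧ W < V ∧ ∀ x ∈ X, addOrderOf x.1 = n' :=
    ⟨_, _, Multiset.filter_add_not (fun x => addOrderOf x.1 = n') V,
      (Multiset.filter_le _ V).lt_of_ne
        fun h_eq => Multiset.filter_eq_self.1 h_eq v hvV rfl, fun _ => Multiset.of_mem_filter⟩
  have hR : ∀ x ∈ R, addOrderOf x.1 ∣ n' := fun x hx => (h.addOrderOf_fst_dvd x hx).trans hnn'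
  obtain ⟨B, R', h_eq, hB, hR', h_le⟩ := exists_blocks_of_addOrderOf_fst_eq hco hC hn'.ne' hR hX
  have h_total : R + (X + W) = B.sum + (R' + W) := by rw [← add_assoc, h_eq, add_assoc]
  refine ⟨n', B, R', W, ⟨hR', AddMonoid.addOrder_dvd_exponent v.1, fun x hx => ?_,
    fun x hx => hH.dvd_of_le (hv_min x (Multiset.mem_of_le hWV.le hx)), ?_⟩, hWV, h_total, hB, ?_⟩
  · have hx' : x ∈ R + X := h_eq ▸ Multiset.mem_add.2 (.inr hx)
    exact (Multiset.mem_add.1 hx').elim (hR x) fun h => (hX x h).dvd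
  · have h_sum := h.sum_snd
    rwa [h_total, Multiset.sum_add, Prod.snd_add,
      show B.sum.sum.2 = 0 from map_sum_sum_of_isBlock hB, zero_add] at h_sum
  · have h_inv : (n' : ℝ)⁻¹ ≤ (n : ℝ)⁻¹ :=
      inv_anti₀ (by exact_mod_cast Nat.pos_of_dvd_of_pos hnn' hn')
        (by exact_mod_cast Nat.le_of_dvd hn' hnn')
    have h_gap : ((n : ℝ)⁻¹ - (n' : ℝ)⁻¹) * (crossNum (R.map Prod.snd) - littleK C) ≤ 0 :=
      mul_nonpos_of_nonneg_of_nonpos (sub_nonneg.2 h_inv)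
        (sub_nonpos.2 (crossNum_le_littleK h.isZeroSumFree_map_snd))
    rw [crossNum_add]
    linarith

/-- From one stage to the next, the left-hand side of the inequality drops by at most the cross
number of the block sums extracted; at the last stage it is `-littleK C / n`. -/
theorem IsStage.exists_blocks (hco : (AddMonoid.exponent H).Coprime (AddMonoid.exponent C))
    (hH : AddOrdersTotal H) (hC : bigK C ≤ 1) (h : IsStage n R V) :
    ∃ B : Multiset (Multiset (H × C)),
      R + V = B.sum ∧ (∀ T ∈ B, IsBlock (AddMonoidHom.snd H C) T) ∧
      crossNum V + (n : ℝ)⁻¹ * (crossNum (R.map Prod.snd) - littleK C) ≤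
        crossNum (fstSums B) - (AddMonoid.exponent H : ℝ)⁻¹ * littleK C := by
  induction V using Multiset.strongInductionOn generalizing R n with | _ V ih =>
  rcases eq_or_ne V 0 with rfl | hV
  · have hR : (R.map (AddMonoidHom.snd H C)).sum = 0 := by
      rw [← map_multiset_sum]
      simpa using h.sum_snd
    obtain rfl : R = 0 := by simpa using h.isZeroSumFree_map_snd.eq_zero hR
    have h_exp : 0 < AddMonoid.exponent H := AddMonoid.exponent_pos.2 .of_finite
    have h_inv : (AddMonoid.exponent H : ℝ)⁻¹ ≤ (n : ℝ)⁻¹ :=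
      inv_anti₀ (by exact_mod_cast Nat.pos_of_dvd_of_pos h.dvd_exponent h_exp)
        (by exact_mod_cast Nat.le_of_dvd h_exp h.dvd_exponent)
    have h_le := mul_le_mul_of_nonneg_right h_inv (littleK_nonneg C)
    exact ⟨0, by simp, by simp, by simpa [fstSums] using h_le⟩
  · obtain ⟨n', B, R', W, h', hWV, h_eq, hB, hB_le⟩ := h.exists_next hco hH hC hV
    obtain ⟨D, hD_eq, hD, hD_le⟩ := ih W hWV h'
    refine ⟨B + D, by rw [h_eq, hD_eq, Multiset.sum_add],
      fun T hT => (Multiset.mem_add.1 hT).elim (hB T) (hD T), ?_⟩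
    rw [fstSums_add, crossNum_add]
    linarith

theorem IsStage.le_of_isMinZeroSum
    (hco : (AddMonoid.exponent H).Coprime (AddMonoid.exponent C))
    (hH : AddOrdersTotal H) (hC : bigK C ≤ 1) (h : IsStage n R V) (hU : IsMinZeroSum (R + V)) :
    crossNum V + (n : ℝ)⁻¹ * (crossNum (R.map Prod.snd) - littleK C) ≤
      littleK H + (AddMonoid.exponent H : ℝ)⁻¹ * (1 - littleK C) := by
  obtain ⟨B, hB_eq, hB, h_le⟩ := h.exists_blocks hco hH hC
  have hH_le := hH.bigK_le_littleK_add_inv_exponent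
  have hB_le := crossNum_le_bigK ((hB_eq ▸ hU).fstSums hB)
  linarith

end Prod

section Maximal
variable {H C : Type*} [AddCommGroup H] [AddCommGroup C] [Finite C] {Uq V : Multiset (H × C)}

/-- As `Uq` realizes every element of `C`, a subsequence of `V` with vanishing first component of
the sum can be completed to a zero-sum subsequence of `Uq + V`. -/
theorem isMinZeroSum_map_fst (hU : IsMinZeroSum (Uq + V)) (hUq_fst : ∀ x ∈ Uq, x.1 = 0)
    (hUq : IsZeroSumFree Uq) (hmax : crossNum (Uq.map Prod.snd) = littleK C) :
    IsMinZeroSum (V.map Prod.fst) := by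
  have h_fst {T : Multiset (H × C)} (hT : T ≤ Uq) : T.sum.1 = 0 :=
    fst_sum_eq_zero fun x hx => hUq_fst x (Multiset.mem_of_le hT hx)
  refine ⟨by simpa using hU.ne_zero_of_add hUq, ?_, fun Y hY hY0 hne hsum => hne ?_⟩
  · have h_sum := congrArg Prod.fst hU.2.1
    rwa [Multiset.sum_add, Prod.fst_add, h_fst le_rfl, zero_add, Multiset.fst_sum] at h_sum
  · obtain ⟨F, hF, rfl⟩ := exists_le_map_eq_of_le_map hY
    obtain ⟨Z, hZ, hZ_sum⟩ := (isZeroSumFree_map_snd hUq hUq_fst).exists_le_sum_eq hmax (-F.sum.2)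
    obtain ⟨T, hT, rfl⟩ := exists_le_map_eq_of_le_map hZ
    have hTF : (T + F).sum = 0 := by
      rw [Multiset.sum_add]
      refine Prod.ext ?_ ?_
      · rw [Prod.fst_add, h_fst hT, Multiset.fst_sum, hsum, zero_add, Prod.fst_zero]
      · rw [Prod.snd_add, Multiset.snd_sum, hZ_sum, neg_add_cancel, Prod.snd_zero]
    have hTF0 : T + F ≠ 0 := by
      rintro h
      simp [(add_eq_zero.1 h).2] at hY0
    rw [((add_eq_add_iff_eq_and_eq hT hF).1 (hU.eq_of_le (add_le_add hT hF) hTF0 hTF)).2]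

variable [Finite H]

theorem le_bigK_prod (hco : (AddMonoid.exponent H).Coprime (AddMonoid.exponent C))
    (hC : bigK C ≤ 1) :
    littleK H + littleK C + (AddMonoid.exponent H : ℝ)⁻¹ * (1 - littleK C) ≤ bigK (H × C) := by
  have h_exp : AddMonoid.exponent (H × C) = AddMonoid.exponent H * AddMonoid.exponent C :=
    AddMonoid.exponent_prod.trans hco.lcm_eq_mul
  have h_le := littleK_add_inv_exponent_le_bigK (H × C)
  have h_inv : (AddMonoid.exponent C : ℝ)⁻¹ = 1 - littleK C := by
    rw [littleK_eq_one_sub_inv_exponent hC, sub_sub_cancel]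
  rw [h_exp, Nat.cast_mul, mul_inv, h_inv] at h_le
  linarith [littleK_add_littleK_le_littleK_prod H C]

theorem exists_mem_fst_ne_zero [Nontrivial H] [Nontrivial C]
    (hco : (AddMonoid.exponent H).Coprime (AddMonoid.exponent C)) (hC : bigK C ≤ 1)
    {U : Multiset (H × C)} (hU : IsMinZeroSum U) (hmax : crossNum U = bigK (H × C)) :
    ∃ x ∈ U, x.1 ≠ 0 := by
  by_contra! h
  have h_le : crossNum (U.map Prod.snd) ≤ 1 :=
    (crossNum_le_bigK (isMinZeroSum_map_snd hU h)).trans hC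
  have h_ge := le_bigK_prod (H := H) hco hC
  rw [← hmax, crossNum_eq_crossNum_map_snd hco h] at h_ge
  have h_pos : 0 < (1 - (AddMonoid.exponent H : ℝ)⁻¹) * littleK C :=
    mul_pos (sub_pos.2 (inv_exponent_lt_one H))
      ((sub_pos.2 (inv_exponent_lt_one C)).trans_le (one_sub_inv_exponent_le_littleK C))
  linarith [one_sub_inv_exponent_le_littleK H]

theorem crossNum_map_snd_eq_littleK
    (hco : (AddMonoid.exponent H).Coprime (AddMonoid.exponent C))
    (hH : AddOrdersTotal H) (hC : bigK C ≤ 1) (hU : IsMinZeroSum (Uq + V))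
    (hmax : crossNum (Uq + V) = bigK (H × C)) (hUq_fst : ∀ x ∈ Uq, x.1 = 0) (hV : ∀ x ∈ V, x.1 ≠ 0)
    (hUq : IsZeroSumFree Uq) : crossNum (Uq.map Prod.snd) = littleK C := by
  have h_free := isZeroSumFree_map_snd hUq hUq_fst
  obtain ⟨v, hvV, hv_min⟩ := Multiset.exists_min_image (fun x => addOrderOf x.1)
    (hU.ne_zero_of_add hUq)
  have h_stage : IsStage (addOrderOf v.1) Uq V := by
    refine ⟨h_free, AddMonoid.addOrder_dvd_exponent v.1, fun x hx => ?_,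
      fun x hx => hH.dvd_of_le (hv_min x hx), by rw [hU.2.1, Prod.snd_zero]⟩
    rw [hUq_fst x hx, addOrderOf_zero]
    exact one_dvd _
  have h_upper := h_stage.le_of_isMinZeroSum hco hH hC hU
  have h_lower := le_bigK_prod (H := H) hco hC
  rw [← hmax, crossNum_add, crossNum_eq_crossNum_map_snd hco hUq_fst] at h_lower
  have h_pos : 0 < 1 - (addOrderOf v.1 : ℝ)⁻¹ := by
    linarith [inv_addOrderOf_le_two_inv (hV v hvV)]
  refine le_antisymm (crossNum_le_littleK h_free) (le_of_mul_le_mul_left ?_ h_pos)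
  linarith

theorem crossNum_map_fst_sub_le
    (hco : (AddMonoid.exponent H).Coprime (AddMonoid.exponent C))
    (hH : AddOrdersTotal H) (hC : bigK C ≤ 1) (hmax : crossNum (Uq + V) = bigK (H × C))
    (hUq_fst : ∀ x ∈ Uq, x.1 = 0) (hUq_max : crossNum (Uq.map Prod.snd) = littleK C)
    (hV : IsMinZeroSum (V.map Prod.fst)) :
    crossNum (V.map Prod.fst) - crossNum V ≤ (AddMonoid.exponent H : ℝ)⁻¹ * littleK C := by
  have h_lower := le_bigK_prod (H := H) hco hC
  rw [← hmax, crossNum_add, crossNum_eq_crossNum_map_snd hco hUq_fst, hUq_max] at h_lower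
  linarith [crossNum_le_bigK hV, hH.bigK_le_littleK_add_inv_exponent]

theorem exists_eq_cons_of_crossNum_map_fst_sub_lt
    (hco : (AddMonoid.exponent H).Coprime (AddMonoid.exponent C))
    (hV : crossNum (V.map Prod.fst) - crossNum V < (AddMonoid.exponent H : ℝ)⁻¹)
    (hsum : V.sum.2 ≠ 0) :
    ∃ (g : H × C) (W : Multiset (H × C)), V = g ::ₘ W ∧ ∀ x ∈ W, x.2 = 0 := by
  classical
  have h_card : ((V.map Prod.snd).card : ℝ) < crossNum (V.map Prod.snd) + 1 := by
    have h_lt := (card_sub_crossNum_map_snd_mul_inv_le hco V).trans_lt hV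
    rw [Multiset.card_map]
    linarith [(mul_lt_iff_lt_one_right (inv_exponent_pos H)).1 h_lt]
  rw [Multiset.snd_sum] at hsum
  obtain ⟨c, S, hcS, hS⟩ := exists_eq_cons_of_card_lt_crossNum_add_one h_card hsum
  obtain ⟨g, hg, -, hW⟩ := (Multiset.map_eq_cons Prod.snd V S c).2 hcS
  exact ⟨g, V.erase g, (Multiset.cons_erase hg).symm,
    fun x hx => hS _ (hW ▸ Multiset.mem_map_of_mem Prod.snd hx)⟩

theorem addOrderOf_fst_eq_exponent
    (hco : (AddMonoid.exponent H).Coprime (AddMonoid.exponent C)) {g : H × C}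
    {W : Multiset (H × C)} (hg : g.2 ≠ 0)
    (h : crossNum ((g ::ₘ W).map Prod.fst) - crossNum (g ::ₘ W) ≤
      (AddMonoid.exponent H : ℝ)⁻¹ * (1 - (addOrderOf g.2 : ℝ)⁻¹)) :
    addOrderOf g.1 = AddMonoid.exponent H := by
  have hW : 0 ≤ crossNum (W.map Prod.fst) - crossNum W := by
    refine le_trans (mul_nonneg (by positivity) (sub_nonneg.2 ?_))
      (card_sub_crossNum_map_snd_mul_inv_le hco W)
    simpa using crossNum_le_card (W.map Prod.snd)
  have h_pos : 0 < 1 - (addOrderOf g.2 : ℝ)⁻¹ := by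
    linarith [inv_addOrderOf_le_two_inv hg]
  rw [Multiset.map_cons, crossNum_cons, crossNum_cons, addOrderOf_eq_mul_of_coprime_exponent hco,
    Nat.cast_mul, mul_inv] at h
  exact addOrderOf_eq_exponent_of_inv_le (le_of_mul_le_mul_right (by linarith) h_pos)

theorem exists_eq_cons_addOrderOf_eq [Nontrivial C]
    (hco : (AddMonoid.exponent H).Coprime (AddMonoid.exponent C))
    (hV : crossNum (V.map Prod.fst) - crossNum V ≤
      (AddMonoid.exponent H : ℝ)⁻¹ * (1 - (AddMonoid.exponent C : ℝ)⁻¹))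
    (hsum : addOrderOf V.sum.2 = AddMonoid.exponent C) :
    ∃ (g : H × C) (W : Multiset (H × C)), V = g ::ₘ W ∧
      addOrderOf g = AddMonoid.exponent H * AddMonoid.exponent C ∧ ∀ x ∈ W, x.2 = 0 := by
  have h_ne : V.sum.2 ≠ 0 := fun h =>
    AddMonoid.one_lt_exponent.ne (by rw [← hsum, h, addOrderOf_zero])
  have hV_lt := hV.trans_lt
    (mul_lt_of_lt_one_right (inv_exponent_pos H) (sub_lt_self 1 (inv_exponent_pos C)))
  obtain ⟨g, W, rfl, hW⟩ := exists_eq_cons_of_crossNum_map_fst_sub_lt hco hV_lt h_ne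
  have hg : (g ::ₘ W).sum.2 = g.2 := by
    rw [Multiset.sum_cons, Prod.snd_add, snd_sum_eq_zero hW, add_zero]
  rw [hg] at hsum h_ne
  rw [← hsum] at hV
  refine ⟨g, W, rfl, ?_, hW⟩
  rw [addOrderOf_eq_mul_of_coprime_exponent hco, addOrderOf_fst_eq_exponent hco h_ne hV, hsum]

theorem exists_eq_cons_add_of_crossNum_eq_bigK [Nontrivial H] [Nontrivial C]
    (hco : (AddMonoid.exponent H).Coprime (AddMonoid.exponent C))
    (hH : AddOrdersTotal H) (hC : bigK C ≤ 1) {U : Multiset (H × C)} (hU : IsMinZeroSum U)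
    (hmax : crossNum U = bigK (H × C)) :
    ∃ (g : H × C) (Up Uq : Multiset (H × C)), U = g ::ₘ (Up + Uq) ∧
      addOrderOf g = AddMonoid.exponent H * AddMonoid.exponent C ∧
      (∀ x ∈ Up, x.2 = 0) ∧ (∀ x ∈ Uq, x.1 = 0) ∧ IsZeroSumFree Up ∧ IsZeroSumFree Uq := by
  classical
  obtain ⟨x, hxU, hx⟩ := exists_mem_fst_ne_zero hco hC hU hmax
  obtain ⟨Uq, V, rfl, hUq_fst, hV⟩ :
      ∃ Uq V, Uq + V = U ∧ (∀ x ∈ Uq, x.1 = 0) ∧ ∀ x ∈ V, x.1 ≠ 0 :=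
    ⟨_, _, Multiset.filter_add_not (fun x => x.1 = 0) U, fun _ => Multiset.of_mem_filter,
      fun _ => Multiset.of_mem_filter⟩
  have hV0 : V ≠ 0 := by
    rintro rfl
    exact hx (hUq_fst x (by simpa using hxU))
  have hUq : IsZeroSumFree Uq :=
    hU.isZeroSumFree_of_lt (lt_add_of_pos_right Uq (pos_iff_ne_zero.2 hV0))
  have h_free := isZeroSumFree_map_snd hUq hUq_fst
  have h_max := crossNum_map_snd_eq_littleK hco hH hC hU hmax hUq_fst hV hUq
  have h_deficit := crossNum_map_fst_sub_le hco hH hC hmax hUq_fst h_max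
    (isMinZeroSum_map_fst hU hUq_fst hUq h_max)
  have h_sum : V.sum.2 = -(Uq.map Prod.snd).sum := by
    rw [eq_neg_iff_add_eq_zero, ← Multiset.snd_sum, add_comm, ← Prod.snd_add, ← Multiset.sum_add,
      hU.2.1, Prod.snd_zero]
  rw [littleK_eq_one_sub_inv_exponent hC] at h_deficit
  obtain ⟨g, Up, rfl, hg, hUp⟩ := exists_eq_cons_addOrderOf_eq hco h_deficit
    (h_sum ▸ addOrderOf_neg_sum_eq_exponent hC h_free h_max)
  rw [Multiset.add_cons, add_comm] at hU ⊢
  exact ⟨g, Up, Uq, rfl, hg, hUp, hUq_fst,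
    hU.isZeroSumFree_of_cons.mono (Multiset.le_add_right Up Uq), hUq⟩

end Maximal

/-- For distinct primes `p, q`, a nontrivial finite abelian `p`-group `H` with
`exp(H) = p^k`, `m ≥ 1` and `G = H ⊕ C_{q^m}`: every minimal zero-sum sequence `U`
over `G` with `k(U) = K(G)` has the form `U = g + Up + Uq` with `g` a single element
of order `p^k q^m`, `Up` a zero-sum free sequence over `H ⊕ {0}` and `Uq` a zero-sum
free sequence over `{0} ⊕ C_{q^m}`. -/
theorem maximal_minimal_zero_sum_structure_pGroup_prod_zmod
    (p q : ℕ) (hp : p.Prime) (hq : q.Prime) (hpq : p ≠ q)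
    (H : Type*) [AddCommGroup H] [Finite H] [Nontrivial H]
    (hH : ∃ n : ℕ, Nat.card H = p ^ n)
    (k : ℕ) (hk : AddMonoid.exponent H = p ^ k)
    (m : ℕ) (hm : 0 < m)
    (U : Multiset (H × ZMod (q ^ m))) (hU : IsMinZeroSum U)
    (hmax : crossNum U = bigK (H × ZMod (q ^ m))) :
    ∃ (g : H × ZMod (q ^ m)) (Up Uq : Multiset (H × ZMod (q ^ m))),
      U = g ::ₘ (Up + Uq) ∧ addOrderOf g = p ^ k * q ^ m ∧
        (∀ x ∈ Up, x.2 = 0) ∧ (∀ x ∈ Uq, x.1 = 0) ∧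
        IsZeroSumFree Up ∧ IsZeroSumFree Uq := by
  have : Fact (1 < q ^ m) := ⟨Nat.one_lt_pow hm.ne' hq.one_lt⟩
  have hC_exp : AddMonoid.exponent (ZMod (q ^ m)) = q ^ m := by
    rw [IsAddCyclic.exponent_eq_card, Nat.card_zmod]
  have hco : (AddMonoid.exponent H).Coprime (AddMonoid.exponent (ZMod (q ^ m))) := by
    rw [hk, hC_exp]
    exact ((Nat.coprime_primes hp hq).2 hpq).pow k m
  have h := exists_eq_cons_add_of_crossNum_eq_bigK hco
    (addOrdersTotal_of_exponent_eq_prime_pow hp hk)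
    (bigK_le_one_of_card_eq_prime_pow hq (Nat.card_zmod _)) hU hmax
  rwa [hk, hC_exp] at h
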